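/- arXiv:1010.4562 — 2 statements merged into one kernel-verified Lean document; each statement's English description precedes it below -/
import Mathlib

section
/- For every integer n ≥ 1, write f^n_{x,y}(x) = Σ_{k=0}^{3^n} a_k(y) x^{3^n - k} with a_k(y) ∈ ℤ[y]. Then for every 0 ≤ k ≤ 3^n, the degree of a_k(y) satisfies deg a_k ≤ 4⌊k/3⌋ - k (with the convention that a polynomial whose degree bound is negative is the zero polynomial). -/
/-!
The statement concerns the support of `f^n(x)` as a polynomial in two variables. Say that `p` has
weight `N` if every monomial `y^d x^i` of `p` satisfies `i + k = N` and `d ≤ 4⌊k/3⌋ - k` for some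
`k ≥ 0`; the claim is that `f^n(x)` has weight `3^n`.

Since `⌊·/3⌋` is superadditive, weights add under multiplication, and weight `N` implies weight
`N + m` whenever `m ≤ 4⌊m/3⌋`. Induct on `n`, starting from `f^0(x) = x` of weight `1`. In
`f^(n+1)(x) = z^3 - 3x^2 z + y` with `z = f^n(x)` of weight `3^n`, the cube has weight `3^(n+1)`;
the term `3x^2 z` has weight `3^n + 2`, which is raised by `m = 2·3^n - 2`, where `m = 0` or
`m ≡ 1 mod 3` and `m ≥ 4`; and `y` has weight `3`, which is raised by a multiple of `3`.
-/

noncomputable section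

/-- The polynomial ring ℤ[y]. -/
abbrev Ry : Type := Polynomial ℤ

/-- The polynomial ring ℤ[x,y] = (ℤ[y])[x], with `x` the outer variable. -/
abbrev Rxy : Type := Polynomial Ry

/-- The element `x ∈ ℤ[x,y]`. -/
def xP : Rxy := Polynomial.X

/-- The element `y ∈ ℤ[x,y]`. -/
def yP : Rxy := Polynomial.C Polynomial.X

/-- `f_{x,y}(z) = z^3 - 3x^2 z + y`, as a polynomial in `z` with coefficients in `ℤ[x,y]`. -/
def fxy : Polynomial Rxy :=
  Polynomial.X ^ 3 - Polynomial.C (3 * xP ^ 2) * Polynomial.X + Polynomial.C yP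

/-- The `n`-th iterate `f^n_{x,y}(z)` (in the variable `z`). -/
def fIter : ℕ → Polynomial Rxy
  | 0 => Polynomial.X
  | n + 1 => fxy.comp (fIter n)

/-- `f^n_{x,y}(x)`, the `n`-th iterate evaluated at `z = x`, an element of `ℤ[x,y]`. -/
def fnx (n : ℕ) : Rxy := (fIter n).eval xP

/-- The coefficient `a_k(y) ∈ ℤ[y]` of `x^(3^n - k)` in `f^n_{x,y}(x)`. -/
def a (n k : ℕ) : Ry := (fnx n).coeff (3 ^ n - k)

/-- `p` has weight `N`: each monomial `y^d x^i` occurring in `p` has `i = N - k` with `0 ≤ k ≤ N`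
and `d ≤ 4⌊k/3⌋ - k`. The bound is written additively to avoid truncated subtraction. -/
def HasWeight (N : ℕ) (p : Rxy) : Prop :=
  ∀ i d, (p.coeff i).coeff d ≠ 0 → ∃ k, i + k = N ∧ d + k ≤ 4 * (k / 3)

theorem HasWeight.add {N : ℕ} {p q : Rxy} (hp : HasWeight N p) (hq : HasWeight N q) :
    HasWeight N (p + q) := by
  intro i d h
  by_cases h1 : (p.coeff i).coeff d = 0
  · refine hq i d fun h2 => h ?_
    simp [h1, h2]
  · exact hp i d h1

theorem HasWeight.neg {N : ℕ} {p : Rxy} (hp : HasWeight N p) : HasWeight N (-p) := by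
  intro i d h
  exact hp i d (by simpa using h)

theorem HasWeight.mul {N M : ℕ} {p q : Rxy} (hp : HasWeight N p) (hq : HasWeight M q) :
    HasWeight (N + M) (p * q) := by
  intro i d h
  rw [Polynomial.coeff_mul, Polynomial.finsetSum_coeff] at h
  obtain ⟨⟨i₁, i₂⟩, hi, h⟩ := Finset.exists_ne_zero_of_sum_ne_zero h
  rw [Polynomial.coeff_mul] at h
  obtain ⟨⟨d₁, d₂⟩, hd, h⟩ := Finset.exists_ne_zero_of_sum_ne_zero h
  rw [Finset.HasAntidiagonal.mem_antidiagonal] at hi hd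
  obtain ⟨k₁, _, _⟩ := hp i₁ d₁ (left_ne_zero_of_mul h)
  obtain ⟨k₂, _, _⟩ := hq i₂ d₂ (right_ne_zero_of_mul h)
  exact ⟨k₁ + k₂, by lia, by lia⟩

theorem HasWeight.raise {N M m : ℕ} {p : Rxy} (hp : HasWeight N p) (hM : N + m = M)
    (hm : m ≤ 4 * (m / 3)) : HasWeight M p := by
  intro i d h
  obtain ⟨k, _, _⟩ := hp i d h
  exact ⟨k + m, by lia, by lia⟩

theorem hasWeight_xP : HasWeight 1 xP := by
  intro i d h
  rw [xP, Polynomial.coeff_X] at h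
  split_ifs at h with hi
  · rw [Polynomial.coeff_one] at h
    split_ifs at h with hd
    · exact ⟨0, by lia, by lia⟩
    · exact absurd rfl h
  · simp at h

theorem hasWeight_yP : HasWeight 3 yP := by
  intro i d h
  rw [yP, Polynomial.coeff_C] at h
  split_ifs at h with hi
  · rw [Polynomial.coeff_X] at h
    split_ifs at h with hd
    · exact ⟨3, by lia, by lia⟩
    · exact absurd rfl h
  · simp at h

theorem hasWeight_three : HasWeight 0 3 := by
  have h1 : HasWeight 0 1 := by
    intro i d h
    rw [Polynomial.coeff_one] at h
    split_ifs at h with hi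
    · rw [Polynomial.coeff_one] at h
      split_ifs at h with hd
      · exact ⟨0, by lia, by lia⟩
      · exact absurd rfl h
    · simp at h
  have h : (3 : Rxy) = 1 + 1 + 1 := by norm_num
  rw [h]
  exact (h1.add h1).add h1

theorem fnx_succ (n : ℕ) :
    fnx (n + 1) = fnx n * fnx n * fnx n + -(3 * (xP * xP) * fnx n) + yP := by
  simp only [fnx, fIter, fxy, Polynomial.eval_comp, Polynomial.eval_add, Polynomial.eval_sub,
    Polynomial.eval_mul, Polynomial.eval_pow, Polynomial.eval_X, Polynomial.eval_C]
  ring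

theorem hasWeight_fnx (n : ℕ) : HasWeight (3 ^ n) (fnx n) := by
  induction n with
  | zero => simpa [fnx, fIter] using hasWeight_xP
  | succ n ih =>
    have hpos : 0 < 3 ^ n := by positivity
    rw [fnx_succ]
    refine HasWeight.add (HasWeight.add ?_ (HasWeight.neg ?_)) ?_
    · exact ((ih.mul ih).mul ih).raise (m := 0) (by ring) (by lia)
    · refine ((hasWeight_three.mul (hasWeight_xP.mul hasWeight_xP)).mul ih).raise
        (m := 2 * 3 ^ n - 2) (by lia) ?_
      cases n with
      | zero => simp
      | succ n =>
        have : 0 < 3 ^ n := by positivity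
        lia
    · exact hasWeight_yP.raise (m := 3 * 3 ^ n - 3) (by lia) (by lia)

/-- Write `f^n_{x,y}(x) = Σ_{k=0}^{3^n} a_k(y) x^(3^n - k)`. For `n ≥ 1` and `0 ≤ k ≤ 3^n`,
the coefficient `a_k(y) ∈ ℤ[y]` satisfies `deg a_k ≤ 4⌊k/3⌋ - k` (where a polynomial whose
degree bound is negative must be the zero polynomial, whose degree is `⊥`). -/
theorem coefficient_degree_bound (n : ℕ) (hn : 1 ≤ n) (k : ℕ) (hk : k ≤ 3 ^ n) :
    (a n k).degree.map (fun d : ℕ => (d : ℤ)) ≤ ((4 * (k / 3 : ℕ) - (k : ℤ) : ℤ) : WithBot ℤ) := by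
  by_cases h0 : a n k = 0
  · simp [h0]
  have hlead : ((fnx n).coeff (3 ^ n - k)).coeff (a n k).natDegree ≠ 0 :=
    Polynomial.leadingCoeff_ne_zero.mpr h0
  obtain ⟨j, hj, hd⟩ := hasWeight_fnx n _ _ hlead
  obtain rfl : j = k := by lia
  rw [Polynomial.degree_eq_natDegree h0]
  change (((a n j).natDegree : ℤ) : WithBot ℤ) ≤ _
  rw [WithBot.coe_le_coe]
  lia
end
end

section
/- For all integers n, m ≥ 1, the resultant with respect to x of F^{(n)}(x,y) and G^{(m)}(x,y) (regarded as polynomials in x with coefficients in ℤ[y]) is a polynomial in ℤ[y] of degree exactly 3^{n+m-1} whose leading coefficient is not divisible by 3. -/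
/-!
Give `x` weight `1` and `y` weight `3`. By induction, `f^n_{x,y}(±x)` only contains monomials of
weight at most `3^n`, so the coefficient of `x^k` in `F^(n)` or `G^(n)` has degree at most
`(3^n - k)/3` in `y`. Expanding the Sylvester determinant, this bounds the degree of the resultant
by `3^n * 3^m / 3`, and the coefficient of `y^(3^(n+m-1))` is the resultant of the parts of top
weight of `F^(n)` and `G^(m)`, specialised at `y = 1` (`coeff_expand_resultant`).

Modulo `3` one has `f(z) = z^3 + y`, hence `f^n(±x) = ±x^(3^n) + y + y^3 + ⋯ + y^(3^(n-1))`. The top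
parts at `y = 1` are therefore `x^(3^n) + 1 = (x + 1)^(3^n)` and `1 - x^(3^m) = (1 - x)^(3^m)`. They
are coprime over `𝔽₃`, so their resultant is nonzero: the coefficient of `y^(3^(n+m-1))` is not
divisible by `3`, and both claims follow.
-/

noncomputable section

/-- The ring homomorphism `ℤ[x,y] → ℤ[x,y]` substituting `-x` for `x`. -/
def negx : Rxy →+* Rxy :=
  (Polynomial.aeval (-Polynomial.X : Rxy) : Polynomial Ry →ₐ[Ry] Rxy).toRingHom

/-- `F^(n)(x,y) = f^n_{x,y}(x) - x ∈ ℤ[x,y]`. -/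
def F (n : ℕ) : Rxy := fnx n - xP

/-- `G^(m)(x,y) = f^m_{x,y}(-x) + x ∈ ℤ[x,y]`. -/
def G (m : ℕ) : Rxy := (fIter m).eval (-xP) + xP

/-- The Sylvester matrix of two polynomials `f` and `g` over a commutative ring `R`,
regarded as having degrees `m` and `n` respectively: the `(n+m) × (n+m)` matrix whose first
`n` rows are the shifted coefficient sequences of `f` and whose last `m` rows are the shifted
coefficient sequences of `g`. -/
def sylvester {R : Type*} [CommRing R] (f g : Polynomial R) (m n : ℕ) :
    Matrix (Fin (n + m)) (Fin (n + m)) R :=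
  Matrix.of fun i j =>
    if (i : ℕ) < n then
      if (i : ℕ) ≤ (j : ℕ) ∧ (j : ℕ) ≤ (i : ℕ) + m then f.coeff (m + i - j) else 0
    else
      if (i : ℕ) - n ≤ (j : ℕ) ∧ (j : ℕ) ≤ ((i : ℕ) - n) + n then g.coeff (n + ((i : ℕ) - n) - j)
      else 0

/-- The resultant of two polynomials `f` and `g` of degrees `m` and `n` over a commutative
ring `R`: the determinant of their Sylvester matrix, an element of `R`. -/
def resultant {R : Type*} [CommRing R] (f g : Polynomial R) (m n : ℕ) : R :=
  (sylvester f g m n).det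

open scoped Polynomial

/-! ### The Sylvester matrix and determinants of polynomial matrices -/

/-- Reversing the order of rows and columns and transposing turns the row-wise Sylvester matrix
into Mathlib's, so the two notions of resultant agree. -/
lemma resultant_eq_polynomial_resultant {R : Type*} [CommRing R] (f g : R[X]) (m n : ℕ) :
    resultant f g m n = Polynomial.resultant f g m n := by
  unfold resultant Polynomial.resultant
  rw [← Matrix.det_transpose (Polynomial.sylvester f g m n),
    ← Matrix.det_submatrix_equiv_self ((finCongr (Nat.add_comm n m)).trans Fin.revPerm)]
  congr 1
  ext i j
  obtain ⟨i, hi⟩ := i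
  obtain ⟨j, hj⟩ := j
  simp only [sylvester, Polynomial.sylvester, Matrix.of_apply, Matrix.submatrix_apply,
    Matrix.transpose_apply, Equiv.trans_apply, finCongr_apply, Fin.revPerm_apply]
  by_cases h : i < n
  · have e : Fin.rev (Fin.cast (Nat.add_comm n m) ⟨i, hi⟩)
        = Fin.natAdd m (⟨n - 1 - i, by omega⟩ : Fin n) := by
      ext; simp; omega
    rw [e, Fin.addCases_right, if_pos h]
    simp only [Set.mem_Icc, Fin.val_rev, Fin.val_cast]
    split_ifs
    · congr 1; omega
    · omega
    · omega
    · rfl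
  · have e : Fin.rev (Fin.cast (Nat.add_comm n m) ⟨i, hi⟩)
        = Fin.castAdd n (⟨m + n - 1 - i, by omega⟩ : Fin m) := by
      ext; simp; omega
    rw [e, Fin.addCases_left, if_neg h]
    simp only [Set.mem_Icc, Fin.val_rev, Fin.val_cast]
    split_ifs
    · congr 1; omega
    · omega
    · omega
    · rfl

lemma map_resultant {R S : Type*} [CommRing R] [CommRing S] (φ : R →+* S) (f g : R[X])
    (m n : ℕ) : φ (resultant f g m n) = resultant (f.map φ) (g.map φ) m n := by
  simp only [resultant_eq_polynomial_resultant, Polynomial.resultant_map_map]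

/-- If the entries of column `j` have degree at most `c j`, then the determinant has degree at most
`∑ j, c j`, and its coefficient there is the determinant of the top coefficients. -/
lemma det_natDegree_le_and_coeff {R ι : Type*} [CommRing R] [Fintype ι] [DecidableEq ι]
    (P : Matrix ι ι R[X]) (c : ι → ℕ) (h : ∀ i j, (P i j).natDegree ≤ c j) :
    P.det.natDegree ≤ ∑ j, c j ∧
      P.det.coeff (∑ j, c j) = (Matrix.of fun i j => (P i j).coeff (c j)).det := by
  have key : ∀ (p : ι → R[X]) (s : Finset ι), (∀ j, (p j).natDegree ≤ c j) →
      (∏ j ∈ s, p j).natDegree ≤ ∑ j ∈ s, c j ∧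
      (∏ j ∈ s, p j).coeff (∑ j ∈ s, c j) = ∏ j ∈ s, (p j).coeff (c j) := by
    intro p s hp
    have hd : ∀ s : Finset ι, (∏ j ∈ s, p j).natDegree ≤ ∑ j ∈ s, c j := fun s =>
      (Polynomial.natDegree_prod_le s p).trans (Finset.sum_le_sum fun j _ => hp j)
    refine ⟨hd s, ?_⟩
    induction s using Finset.induction_on with
    | empty => simp
    | insert a s ha ih =>
      rw [Finset.prod_insert ha, Finset.sum_insert ha, Finset.prod_insert ha,
        Polynomial.coeff_mul_add_eq_of_natDegree_le (hp a) (hd s), ih]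
  constructor
  · rw [Matrix.det_apply']
    refine Polynomial.natDegree_sum_le_of_forall_le _ _ fun σ _ => ?_
    have := (key (fun j => P (σ j) j) Finset.univ fun j => h _ _).1
    refine (Polynomial.natDegree_mul_le).trans ?_
    simpa using this
  · rw [Matrix.det_apply', Matrix.det_apply', Polynomial.finsetSum_coeff]
    refine Finset.sum_congr rfl fun σ _ => ?_
    rw [← Polynomial.C_eq_intCast, Polynomial.coeff_C_mul,
      (key (fun j => P (σ j) j) Finset.univ fun j => h _ _).2]
    rfl

/-! ### Weights and the top coefficient of a resultant -/

/-- The bivariate polynomial `p(x, y) ∈ R[y][x]` has weight at most `w`, where `x` has weight `1`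
and `y` has weight `3`. -/
def WeightLE {R : Type*} [CommRing R] (p : R[X][X]) (w : ℕ) : Prop :=
  ∀ k j, w < 3 * j + k → (p.coeff k).coeff j = 0

namespace WeightLE

variable {R : Type*} [CommRing R] {p q : R[X][X]} {v w : ℕ}

lemma mono (h : WeightLE p v) (hvw : v ≤ w) : WeightLE p w :=
  fun k j hj => h k j (hvw.trans_lt hj)

lemma add (hp : WeightLE p w) (hq : WeightLE q w) : WeightLE (p + q) w := fun k j h => by
  simp [hp k j h, hq k j h]

lemma neg (hp : WeightLE p w) : WeightLE (-p) w := fun k j h => by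
  simp [hp k j h]

lemma sub (hp : WeightLE p w) (hq : WeightLE q w) : WeightLE (p - q) w := fun k j h => by
  simp [hp k j h, hq k j h]

lemma mul (hp : WeightLE p v) (hq : WeightLE q w) : WeightLE (p * q) (v + w) := fun k j h => by
  rw [Polynomial.coeff_mul, Polynomial.finsetSum_coeff]
  refine Finset.sum_eq_zero fun a ha => ?_
  rw [Polynomial.coeff_mul]
  refine Finset.sum_eq_zero fun b hb => ?_
  have ha : a.1 + a.2 = k := Finset.HasAntidiagonal.mem_antidiagonal.1 ha
  have hb : b.1 + b.2 = j := Finset.HasAntidiagonal.mem_antidiagonal.1 hb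
  by_cases h1 : v < 3 * b.1 + a.1
  · rw [hp _ _ h1, zero_mul]
  · rw [hq _ _ (by omega), mul_zero]

lemma X : WeightLE (Polynomial.X : R[X][X]) 1 := fun k j h => by
  rw [Polynomial.coeff_X]
  split_ifs with hk
  · rw [Polynomial.coeff_one, if_neg (by omega)]
  · rfl

lemma C_X : WeightLE (Polynomial.C Polynomial.X : R[X][X]) 3 := fun k j h => by
  rw [Polynomial.coeff_C]
  split_ifs with hk
  · rw [Polynomial.coeff_X, if_neg (by omega)]
  · rfl

lemma three : WeightLE (3 : R[X][X]) 0 := fun k j h => by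
  have e : (3 : R[X][X]) = Polynomial.C (Polynomial.C 3) := by
    rw [map_ofNat, map_ofNat]
  rw [e, Polynomial.coeff_C]
  split_ifs with hk
  · rw [Polynomial.coeff_C, if_neg (by omega)]
  · rfl

lemma map {S : Type*} [CommRing S] (φ : R →+* S) (hp : WeightLE p w) :
    WeightLE (p.map (Polynomial.mapRingHom φ)) w := fun k j h => by
  simp [hp k j h]

lemma natDegree_coeff_le (hp : WeightLE p w) {k : ℕ} (hk : k ≤ w) :
    3 * (p.coeff k).natDegree + k ≤ w := by
  have : (p.coeff k).natDegree ≤ (w - k) / 3 :=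
    Polynomial.natDegree_le_iff_coeff_eq_zero.2 fun j hj => hp k j (by omega)
  omega

end WeightLE

/-- The power of `t` by which row `i` of the Sylvester matrix has to be multiplied so that, with
`y = t ^ 3`, column `j` has degree at most `j` in `t`: the number of places by which the row is
shifted. -/
def rowShift (n i : ℕ) : ℕ := if i < n then i else i - n

lemma sum_val_eq_sum_rowShift_add (m n : ℕ) :
    ∑ j : Fin (n + m), (j : ℕ) = (∑ i : Fin (n + m), rowShift n i) + m * n := by
  simp [Fin.sum_univ_add, rowShift, Finset.sum_add_distrib]
  ring

/-- The Sylvester matrix after the substitution `y = t ^ 3` (`Polynomial.expand`), which makes all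
weights integral, and after multiplying row `i` by `t ^ rowShift n i`. -/
def shiftedSylvester {R : Type*} [CommRing R] (f g : R[X][X]) (m n : ℕ) :
    Matrix (Fin (n + m)) (Fin (n + m)) R[X] :=
  Matrix.of fun i j => Polynomial.X ^ rowShift n i *
    Polynomial.expand R 3 (sylvester f g m n i j)

section Weights

variable {R : Type*} [CommRing R] {f g : R[X][X]} {f' g' : R[X]} {m n : ℕ}

lemma det_shiftedSylvester (f g : R[X][X]) (m n : ℕ) : (shiftedSylvester f g m n).det =
    Polynomial.expand R 3 (resultant f g m n) *
      Polynomial.X ^ (∑ i : Fin (n + m), rowShift n i) := by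
  rw [shiftedSylvester, resultant, AlgHom.map_det, mul_comm, ← Finset.prod_pow_eq_pow_sum,
    ← Matrix.det_mul_column]
  rfl

lemma natDegree_shiftedSylvester_le (hf : WeightLE f m) (hg : WeightLE g n)
    (i j : Fin (n + m)) : (shiftedSylvester f g m n i j).natDegree ≤ j := by
  have key : ∀ (p : R[X]) (r : ℕ), 3 * p.natDegree + r ≤ (j : ℕ) →
      (Polynomial.X ^ r * Polynomial.expand R 3 p).natDegree ≤ (j : ℕ) := fun p r h => by
    refine Polynomial.natDegree_mul_le.trans ?_
    have := Polynomial.natDegree_X_pow_le (R := R) r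
    rw [Polynomial.natDegree_expand]
    omega
  simp only [shiftedSylvester, sylvester, rowShift, Matrix.of_apply]
  split_ifs with h1 h2 h2
  · have := hf.natDegree_coeff_le (k := m + i - j) (by omega)
    exact key _ _ (by omega)
  · simp
  · have := hg.natDegree_coeff_le (k := n + (i - n) - j) (by omega)
    exact key _ _ (by omega)
  · simp

lemma natDegree_resultant_le (hf : WeightLE f m) (hg : WeightLE g n) :
    3 * (resultant f g m n).natDegree ≤ m * n := by
  nontriviality R
  have h := (det_natDegree_le_and_coeff _ (fun j : Fin (n + m) => (j : ℕ))
    (natDegree_shiftedSylvester_le hf hg)).1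
  rcases eq_or_ne (resultant f g m n) 0 with h0 | h0
  · simp [h0]
  · rw [det_shiftedSylvester, sum_val_eq_sum_rowShift_add, Polynomial.natDegree_mul_X_pow _
      (by rwa [Ne, Polynomial.expand_eq_zero (by norm_num)]), Polynomial.natDegree_expand] at h
    omega

/-- The coefficient of `y ^ (m * n / 3)` in the resultant of polynomials of weight at most `m` and
`n` is the resultant of their parts `f'`, `g'` of exact weight `m` and `n`, specialised at
`y = 1`. -/
lemma coeff_expand_resultant (hf : WeightLE f m) (hg : WeightLE g n)
    (hf' : ∀ k ≤ m, (Polynomial.expand R 3 (f.coeff k)).coeff (m - k) = f'.coeff k)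
    (hg' : ∀ k ≤ n, (Polynomial.expand R 3 (g.coeff k)).coeff (n - k) = g'.coeff k) :
    (Polynomial.expand R 3 (resultant f g m n)).coeff (m * n) = resultant f' g' m n := by
  have h := (det_natDegree_le_and_coeff _ (fun j : Fin (n + m) => (j : ℕ))
    (natDegree_shiftedSylvester_le hf hg)).2
  rw [det_shiftedSylvester, sum_val_eq_sum_rowShift_add,
    Nat.add_comm _ (m * n), Polynomial.coeff_mul_X_pow] at h
  rw [h, resultant]
  congr 1
  ext i j
  simp only [shiftedSylvester, sylvester, rowShift, Matrix.of_apply]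
  split_ifs with h1 h2 h2
  · rw [← hf' _ (by omega), Polynomial.coeff_X_pow_mul', if_pos h2.1]
    congr 1
    omega
  · simp
  · rw [← hg' _ (by omega), Polynomial.coeff_X_pow_mul', if_pos h2.1]
    congr 1
    omega
  · simp

end Weights

/-! ### Weights of the iterates -/

lemma eval_fIter_succ (n : ℕ) (s : Rxy) :
    (fIter (n + 1)).eval s =
      (fIter n).eval s ^ 3 - 3 * xP ^ 2 * (fIter n).eval s + yP := by
  simp [fIter, fxy]

lemma weightLE_eval_fIter {s : Rxy} (hs : WeightLE s 1) (n : ℕ) :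
    WeightLE ((fIter n).eval s) (3 ^ n) := by
  induction n with
  | zero => simpa [fIter] using hs
  | succ n ih =>
    have h1 : 1 ≤ 3 ^ n := Nat.one_le_pow _ _ (by norm_num)
    rw [eval_fIter_succ]
    refine WeightLE.add (WeightLE.sub ?_ ?_) (WeightLE.C_X.mono (by omega))
    · rw [pow_three]
      exact (ih.mul (ih.mul ih)).mono (by omega)
    · rw [pow_two]
      exact ((WeightLE.three.mul (WeightLE.X.mul WeightLE.X)).mul ih).mono (by omega)

lemma weightLE_F (n : ℕ) : WeightLE (F n) (3 ^ n) :=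
  (weightLE_eval_fIter WeightLE.X n).sub (WeightLE.X.mono (Nat.one_le_pow _ _ (by norm_num)))

lemma weightLE_G (n : ℕ) : WeightLE (G n) (3 ^ n) :=
  (weightLE_eval_fIter WeightLE.X.neg n).add (WeightLE.X.mono (Nat.one_le_pow _ _ (by norm_num)))

/-! ### Reduction modulo three -/

/-- The additive polynomial `y + y^3 + ⋯ + y^(3^(n-1))` over `𝔽₃`. -/
def frobSum : ℕ → (ZMod 3)[X]
  | 0 => 0
  | n + 1 => frobSum n ^ 3 + Polynomial.X

lemma coeff_frobSum (n : ℕ) : (frobSum (n + 1)).coeff (3 ^ n) = 1 := by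
  induction n with
  | zero => simp [frobSum]
  | succ n ih =>
    have h1 : 1 ≤ 3 ^ n := Nat.one_le_pow _ _ (by norm_num)
    rw [frobSum, ← ZMod.expand_card, Polynomial.coeff_add, pow_succ,
      Polynomial.coeff_expand_mul (by norm_num), ih, Polynomial.coeff_X, if_neg (by omega),
      add_zero]

/-- Reduction modulo `3` of elements of `ℤ[y][x]`. -/
def red : Rxy →+* (ZMod 3)[X][X] :=
  Polynomial.mapRingHom (Polynomial.mapRingHom (Int.castRingHom (ZMod 3)))

/-- Modulo `3` the map `f` is `z ↦ z ^ 3 + y`, so its iterates are additive in `z` and `y`. -/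
lemma red_eval_fIter (n : ℕ) (s : Rxy) :
    red ((fIter n).eval s) = red s ^ 3 ^ n + Polynomial.C (frobSum n) := by
  induction n with
  | zero => simp [fIter, frobSum]
  | succ n ih =>
    have h3 : (3 : (ZMod 3)[X][X]) = 0 := CharP.cast_eq_zero (ZMod 3)[X][X] 3
    have hy : red yP = Polynomial.C Polynomial.X := by simp [red, yP]
    rw [eval_fIter_succ, map_add, map_sub, map_mul, map_mul, map_pow, ih, map_ofNat, h3, hy,
      add_pow_char, frobSum, ← pow_mul, ← pow_succ]
    simp [add_assoc]

lemma red_F (n : ℕ) : red (F n) =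
    Polynomial.X ^ 3 ^ n + Polynomial.C (frobSum n) - Polynomial.X := by
  rw [F, fnx, map_sub, red_eval_fIter]
  simp [red, xP]

lemma red_G (n : ℕ) : red (G n) =
    -Polynomial.X ^ 3 ^ n + Polynomial.C (frobSum n) + Polynomial.X := by
  have ho : Odd (3 ^ n) := Odd.pow (by decide)
  have hx : red xP = Polynomial.X := by simp [red, xP]
  have hneg : red (-xP) ^ 3 ^ n = -Polynomial.X ^ 3 ^ n := by
    rw [map_neg, hx]
    exact ho.neg_pow (Polynomial.X : (ZMod 3)[X][X])
  rw [G, map_add, red_eval_fIter, hneg, hx]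

/-- The part of weight `3 ^ n` of `u x^(3^n) + (y + y^3 + ⋯ + y^(3^(n-1))) + v x` at `y = 1`. -/
lemma top_part (n : ℕ) (hn : 1 ≤ n) (u v : ZMod 3) (k : ℕ) (hk : k ≤ 3 ^ n) :
    (Polynomial.expand (ZMod 3) 3 ((Polynomial.C (Polynomial.C u) * Polynomial.X ^ 3 ^ n +
      Polynomial.C (frobSum n) + Polynomial.C (Polynomial.C v) * Polynomial.X :
        (ZMod 3)[X][X]).coeff k)).coeff (3 ^ n - k) =
    (Polynomial.C u * Polynomial.X ^ 3 ^ n + 1 : (ZMod 3)[X]).coeff k := by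
  obtain ⟨n, rfl⟩ := Nat.exists_eq_add_of_le' hn
  have h1 : 1 ≤ 3 ^ n := Nat.one_le_pow _ _ (by norm_num)
  have h3 : 3 ^ (n + 1) = 3 ^ n * 3 := pow_succ _ _
  simp only [Polynomial.coeff_add, Polynomial.coeff_C_mul, Polynomial.coeff_X_pow,
    Polynomial.coeff_C, Polynomial.coeff_X, Polynomial.coeff_one, map_add]
  rcases Nat.eq_zero_or_pos k with rfl | hk0
  · have : (Polynomial.expand (ZMod 3) 3 (frobSum (n + 1))).coeff (3 ^ (n + 1)) = 1 := by
      rw [h3, Polynomial.coeff_expand_mul (by norm_num), coeff_frobSum]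
    have e : 0 ≠ 3 ^ (n + 1) := by omega
    simp [this, e]
  · rcases eq_or_ne k 1 with rfl | hk1
    · have e1 : 1 ≠ 3 ^ (n + 1) := by omega
      have e2 : 3 ^ (n + 1) - 1 ≠ 0 := by omega
      simp [e1, Polynomial.coeff_C, e2]
    · rcases eq_or_ne k (3 ^ (n + 1)) with rfl | hk2
      · simp [hk1.symm]
      · simp [hk2, hk1.symm, hk0.ne']

/-- The two polynomials are `(x + 1)^(3^n)` and `(1 - x)^(3^m)`, which are coprime because
`2 ≠ 0` in `𝔽₃`. -/
lemma resultant_top_ne_zero (n m : ℕ) :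
    resultant (Polynomial.C 1 * Polynomial.X ^ 3 ^ n + 1 : (ZMod 3)[X])
      (Polynomial.C (-1) * Polynomial.X ^ 3 ^ m + 1) (3 ^ n) (3 ^ m) ≠ 0 := by
  have h0 : ∀ k : ℕ, 3 ^ k ≠ 0 := fun k => by positivity
  have d1 : (Polynomial.C 1 * Polynomial.X ^ 3 ^ n + 1 : (ZMod 3)[X]).natDegree = 3 ^ n := by
    rw [← Polynomial.C_1, Polynomial.natDegree_add_C,
      Polynomial.natDegree_C_mul_X_pow _ _ one_ne_zero]
  have d2 : (Polynomial.C (-1) * Polynomial.X ^ 3 ^ m + 1 : (ZMod 3)[X]).natDegree = 3 ^ m := by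
    rw [← Polynomial.C_1, Polynomial.natDegree_add_C,
      Polynomial.natDegree_C_mul_X_pow _ _ (by decide)]
  have hc : IsCoprime (Polynomial.C 1 * Polynomial.X ^ 3 ^ n + 1 : (ZMod 3)[X])
      (Polynomial.C (-1) * Polynomial.X ^ 3 ^ m + 1) := by
    have e1 : (Polynomial.C 1 * Polynomial.X ^ 3 ^ n + 1 : (ZMod 3)[X]) =
        (Polynomial.X + 1) ^ 3 ^ n := by
      rw [add_pow_char_pow]; simp
    have e2 : (Polynomial.C (-1) * Polynomial.X ^ 3 ^ m + 1 : (ZMod 3)[X]) =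
        (-Polynomial.X + 1) ^ 3 ^ m := by
      rw [add_pow_char_pow, Odd.neg_pow (Odd.pow (by decide))]; simp
    rw [e1, e2]
    refine IsCoprime.pow ⟨-1, -1, ?_⟩
    have h3 : (3 : (ZMod 3)[X]) = 0 := CharP.cast_eq_zero (ZMod 3)[X] 3
    linear_combination -h3
  have := Polynomial.resultant_ne_zero _ _ hc
  rwa [d1, d2, ← resultant_eq_polynomial_resultant] at this

/-- For `n, m ≥ 1`, the resultant with respect to `x` of `F^(n)(x,y)` and `G^(m)(x,y)`
(regarded as polynomials in `x` of degrees `3^n` and `3^m` with coefficients in `ℤ[y]`) is a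
polynomial in `ℤ[y]` of degree exactly `3^(n+m-1)` whose leading coefficient is not divisible
by `3`. -/
theorem resultant_F_G_degree_and_leading_coeff (n m : ℕ) (hn : 1 ≤ n) (hm : 1 ≤ m) :
    (resultant (F n) (G m) (3 ^ n) (3 ^ m)).degree = (3 ^ (n + m - 1) : ℕ) ∧
      ¬ (3 : ℤ) ∣ (resultant (F n) (G m) (3 ^ n) (3 ^ m)).leadingCoeff := by
  have hD : 3 ^ n * 3 ^ m = 3 ^ (n + m - 1) * 3 := by
    rw [← pow_add, ← pow_succ]
    congr 1
    omega
  have top : ∀ (p : Rxy) (u v : ZMod 3) (l : ℕ), 1 ≤ l → red p =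
      Polynomial.C (Polynomial.C u) * Polynomial.X ^ 3 ^ l + Polynomial.C (frobSum l) +
        Polynomial.C (Polynomial.C v) * Polynomial.X →
      ∀ k ≤ 3 ^ l, (Polynomial.expand (ZMod 3) 3 ((red p).coeff k)).coeff (3 ^ l - k) =
        (Polynomial.C u * Polynomial.X ^ 3 ^ l + 1 : (ZMod 3)[X]).coeff k := by
    intro p u v l hl hp
    rw [hp]
    exact top_part l hl u v
  set ρ := resultant (F n) (G m) (3 ^ n) (3 ^ m) with hρ
  have hdeg : ρ.natDegree ≤ 3 ^ (n + m - 1) := by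
    have := natDegree_resultant_le (weightLE_F n) (weightLE_G m)
    rw [← hρ] at this
    omega
  have hcoeff : ¬ (3 : ℤ) ∣ ρ.coeff (3 ^ (n + m - 1)) := by
    have h := coeff_expand_resultant (f := red (F n)) (g := red (G m))
      ((weightLE_F n).map _) ((weightLE_G m).map _)
      (top (F n) 1 (-1) n hn (by rw [red_F]; simp only [map_neg, map_one]; ring))
      (top (G m) (-1) 1 m hm (by rw [red_G]; simp only [map_neg, map_one]; ring))
    have hmap : resultant (red (F n)) (red (G m)) (3 ^ n) (3 ^ m) =
        ρ.map (Int.castRingHom (ZMod 3)) :=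
      (map_resultant (Polynomial.mapRingHom (Int.castRingHom (ZMod 3))) _ _ _ _).symm
    rw [hmap, hD, Polynomial.coeff_expand_mul (by norm_num), Polynomial.coeff_map] at h
    intro hdvd
    refine resultant_top_ne_zero n m (h.symm.trans ?_)
    simpa using (ZMod.intCast_zmod_eq_zero_iff_dvd _ 3).2 hdvd
  have hnd : ρ.natDegree = 3 ^ (n + m - 1) :=
    Polynomial.natDegree_eq_of_le_of_coeff_ne_zero hdeg fun h0 => hcoeff (by simp [h0])
  refine ⟨?_, by rwa [Polynomial.leadingCoeff, hnd]⟩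
  rw [Polynomial.degree_eq_natDegree fun h0 => hcoeff (by simp [h0]), hnd]
end
end
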